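/- arXiv:1812.00808 — 2 statements merged into one kernel-verified Lean document; each statement's English description precedes it below -/
import Mathlib

section
/- Let A ∈ ℝ^{s×s} be invertible and γ^0, …, γ^K ∈ ℝ^s, and fix z^F ∈ ℂ. Then for all sufficiently negative real x the matrix I − (z^F + x)A is invertible, and R(z^F, x) → φ₀(z^F) − μ(z^F)ᵀ A^{−1}𝟙 as x → −∞ along the reals. (Slow stiff limit of the scalar stability function of a step predictor-corrector MRI-GARK method with invertible base coefficient matrix, e.g. an SDIRK base method.) -/
/-- The φ-functions: φ₀(z) = e^z and φ_{k+1}(z) = ∫₀¹ e^{z(1−t)} t^k dt. -/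
noncomputable def phi (k : ℕ) (z : ℂ) : ℂ :=
  match k with
  | 0 => Complex.exp z
  | k + 1 => ∫ t in (0:ℝ)..1, Complex.exp (z * (1 - (t : ℂ))) * (t : ℂ) ^ k

/-!
For `c ≠ 0` one has `B - c • A = (-c) • (A - c⁻¹ • B)`, and `A - c⁻¹ • B` tends to the invertible
matrix `A` as `c → ∞`. Since the determinant and the inverse are continuous at `A`, the matrix
`B - c • A` is eventually invertible and `c • (B - c • A)⁻¹ → -A⁻¹`. With `B = 1 - zF • A` and
`c = zS` this is the limit of the stability function, in every complex direction of `zS`.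
-/

open Bornology Filter Matrix Topology

section MatrixMap

variable {ι R S : Type*} [Fintype ι] [DecidableEq ι] [CommRing R] [CommRing S] (f : R →+* S)
  {A : Matrix ι ι R}

theorem isUnit_det_map (hA : IsUnit A.det) : IsUnit (A.map f).det :=
  f.map_det A ▸ hA.map f

theorem map_nonsing_inv (hA : IsUnit A.det) : A⁻¹.map f = (A.map f)⁻¹ := by
  refine (Matrix.inv_eq_right_inv ?_).symm
  rw [← Matrix.map_mul, Matrix.mul_nonsing_inv A hA, Matrix.map_one f f.map_zero f.map_one]

theorem map_nonsing_inv_mulVec (hA : IsUnit A.det) (v : ι → R) (i : ι) :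
    f ((A⁻¹ *ᵥ v) i) = ((A.map f)⁻¹ *ᵥ (f ∘ v)) i := by
  rw [RingHom.map_mulVec, map_nonsing_inv f hA]

end MatrixMap

section MatrixPencil

variable {ι 𝕜 : Type*} [Fintype ι] [DecidableEq ι]

theorem isUnit_det_smul_iff [Field 𝕜] {c : 𝕜} (hc : c ≠ 0) {A : Matrix ι ι 𝕜} :
    IsUnit (c • A).det ↔ IsUnit A.det := by
  simp only [Matrix.det_smul, IsUnit.mul_iff, (isUnit_iff_ne_zero.mpr hc).pow, true_and]

theorem sub_smul_eq_neg_smul_sub_inv_smul {E : Type*} [DivisionRing 𝕜] [AddCommGroup E]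
    [Module 𝕜 E] {c : 𝕜} (hc : c ≠ 0) (a b : E) : b - c • a = (-c) • (a - c⁻¹ • b) := by
  rw [neg_smul, smul_sub, smul_inv_smul₀ hc, neg_sub]

theorem smul_inv_sub_smul [Field 𝕜] {c : 𝕜} (hc : c ≠ 0) {A B : Matrix ι ι 𝕜}
    (h : IsUnit (A - c⁻¹ • B).det) : c • (B - c • A)⁻¹ = -(A - c⁻¹ • B)⁻¹ := by
  have inv_pencil : (B - c • A)⁻¹ = (-c)⁻¹ • (A - c⁻¹ • B)⁻¹ := by
    rw [sub_smul_eq_neg_smul_sub_inv_smul hc]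
    exact Matrix.inv_smul' _ (Units.mk0 (-c) (neg_ne_zero.mpr hc)) h
  rw [inv_pencil, inv_neg, neg_smul, smul_neg, smul_inv_smul₀ hc]

variable [NormedField 𝕜] {A : Matrix ι ι 𝕜}

theorem tendsto_sub_inv_smul_cobounded {E : Type*} [AddCommGroup E] [Module 𝕜 E]
    [TopologicalSpace E] [IsTopologicalAddGroup E] [ContinuousSMul 𝕜 E] (a b : E) :
    Tendsto (fun c : 𝕜 => a - c⁻¹ • b) (cobounded 𝕜) (𝓝 a) := by
  simpa using (tendsto_inv₀_cobounded (α := 𝕜)).smul_const b |>.const_sub a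

theorem eventually_isUnit_det_sub_inv_smul_cobounded (hA : IsUnit A.det) (B : Matrix ι ι 𝕜) :
    ∀ᶠ c in cobounded 𝕜, IsUnit (A - c⁻¹ • B).det := by
  have tendsto_det : Tendsto (fun c : 𝕜 => (A - c⁻¹ • B).det) (cobounded 𝕜) (𝓝 A.det) :=
    (continuous_id.matrix_det.tendsto A).comp (tendsto_sub_inv_smul_cobounded A B)
  exact (tendsto_det.eventually_ne hA.ne_zero).mono fun _ => IsUnit.mk0 _

theorem eventually_isUnit_det_sub_smul_cobounded (hA : IsUnit A.det) (B : Matrix ι ι 𝕜) :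
    ∀ᶠ c in cobounded 𝕜, IsUnit (B - c • A).det := by
  filter_upwards [eventually_ne_cobounded 0,
    eventually_isUnit_det_sub_inv_smul_cobounded hA B] with c hc h
  rwa [sub_smul_eq_neg_smul_sub_inv_smul hc, isUnit_det_smul_iff (neg_ne_zero.mpr hc)]

theorem tendsto_smul_inv_sub_smul_cobounded (hA : IsUnit A.det) (B : Matrix ι ι 𝕜) :
    Tendsto (fun c => c • (B - c • A)⁻¹) (cobounded 𝕜) (𝓝 (-A⁻¹)) := by
  have continuousAt_inv : ContinuousAt Inv.inv A := by
    refine continuousAt_matrix_inv A ?_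
    simpa only [Ring.inverse_eq_inv'] using continuousAt_inv₀ hA.ne_zero
  have tendsto_inv : Tendsto (fun c : 𝕜 => -(A - c⁻¹ • B)⁻¹) (cobounded 𝕜) (𝓝 (-A⁻¹)) :=
    (continuousAt_inv.tendsto.comp (tendsto_sub_inv_smul_cobounded A B)).neg
  refine tendsto_inv.congr' ?_
  filter_upwards [eventually_ne_cobounded 0,
    eventually_isUnit_det_sub_inv_smul_cobounded hA B] with c hc h
  exact (smul_inv_sub_smul hc h).symm

end MatrixPencil

section StabilityFunction

variable {ι : Type*} {n : ℕ}

/-- The weight vector `μ(z) = ∑ₖ φₖ₊₁(z) γᵏ` of a step predictor-corrector MRI-GARK method, with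
complex coefficients `γ`. -/
noncomputable def slowWeights (γ : Fin n → ι → ℂ) (z : ℂ) : ι → ℂ :=
  fun j => ∑ k : Fin n, phi (k + 1) z * γ k j

variable [Fintype ι] [DecidableEq ι]

/-- The scalar stability function `R(zF, zS)` of a step predictor-corrector MRI-GARK method, with
complex coefficients `A` and `γ`. The inverse is `0` where `1 - (zF + zS) • A` is singular. -/
noncomputable def stabilityFunction (A : Matrix ι ι ℂ) (γ : Fin n → ι → ℂ) (zF zS : ℂ) : ℂ :=
  phi 0 zF + zS * (slowWeights γ zF ⬝ᵥ (1 - (zF + zS) • A)⁻¹ *ᵥ fun _ => 1)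

theorem stmt_9_general {A : Matrix ι ι ℂ} (hA : IsUnit A.det) (γ : Fin n → ι → ℂ) (zF : ℂ) :
    (∀ᶠ zS in cobounded ℂ, IsUnit (1 - (zF + zS) • A).det) ∧
      Tendsto (fun zS => stabilityFunction A γ zF zS) (cobounded ℂ)
        (𝓝 (phi 0 zF - slowWeights γ zF ⬝ᵥ A⁻¹ *ᵥ fun _ => 1)) := by
  have pencil_eq (zS : ℂ) : 1 - (zF + zS) • A = (1 - zF • A) - zS • A := by
    rw [add_smul, sub_sub]
  refine ⟨by simpa only [pencil_eq] using eventually_isUnit_det_sub_smul_cobounded hA _, ?_⟩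
  have continuous_output : Continuous fun M : Matrix ι ι ℂ =>
      phi 0 zF + slowWeights γ zF ⬝ᵥ M *ᵥ fun _ => 1 := by
    fun_prop
  have tendsto_output := (continuous_output.tendsto _).comp
    (tendsto_smul_inv_sub_smul_cobounded hA (1 - zF • A))
  simpa only [Function.comp_def, stabilityFunction, pencil_eq, smul_mulVec, dotProduct_smul,
    smul_eq_mul, neg_mulVec, dotProduct_neg, ← sub_eq_add_neg] using tendsto_output

end StabilityFunction

/-- Slow stiff limit of the scalar stability function of a step
predictor-corrector MRI-GARK method with invertible base coefficient matrix:
R(z^F, x) → φ₀(z^F) − μ(z^F)ᵀ A⁻¹𝟙 as x → −∞. -/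
theorem stmt_9 (s K : ℕ) (hs : 1 ≤ s) (A : Matrix (Fin s) (Fin s) ℝ)
    (hA : IsUnit A.det) (γ : Fin (K + 1) → Fin s → ℝ) (zF : ℂ) :
    (∃ x₀ : ℝ, ∀ x : ℝ, x ≤ x₀ →
      IsUnit (1 - (zF + (x : ℂ)) • A.map Complex.ofReal).det) ∧
    Filter.Tendsto
      (fun x : ℝ => phi 0 zF + (x : ℂ) * ∑ j,
        (∑ k : Fin (K + 1), phi ((k : ℕ) + 1) zF * ((γ k j : ℝ) : ℂ)) *
          ((1 - (zF + (x : ℂ)) • A.map Complex.ofReal)⁻¹.mulVec (fun _ => 1)) j)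
      Filter.atBot
      (nhds (phi 0 zF - ∑ j,
        (∑ k : Fin (K + 1), phi ((k : ℕ) + 1) zF * ((γ k j : ℝ) : ℂ)) *
          (((A⁻¹.mulVec (fun _ => 1)) j : ℝ) : ℂ))) := by
  have inv_mulVec_one (j : Fin s) : (((A⁻¹ *ᵥ fun _ => 1) j : ℝ) : ℂ) =
      ((A.map Complex.ofReal)⁻¹ *ᵥ fun _ => 1) j := by
    simpa [Function.comp_def] using! map_nonsing_inv_mulVec Complex.ofRealHom hA (fun _ => 1) j
  obtain ⟨isUnit_det, tendsto_R⟩ :=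
    stmt_9_general (isUnit_det_map Complex.ofRealHom hA) (fun k j => (γ k j : ℂ)) zF
  have tendsto_ofReal := RCLike.tendsto_ofReal_atBot_cobounded ℂ
  simp only [inv_mulVec_one]
  exact ⟨eventually_atBot.mp (tendsto_ofReal.eventually isUnit_det),
    tendsto_R.comp tendsto_ofReal⟩
end

section
/- Let A = D + T ∈ ℝ^{s×s} with D diagonal and T strictly lower triangular, let δc ∈ ℝ^s, c̄ ∈ ℝ^s, and let Γ_{i,j}(t) = Σ_{k=0}^K Γ^k_{i,j} t^k and Ψ_{i,j}(t) = Σ_{k=0}^K Ψ^k_{i,j} t^k. Let H > 0, λ^F, λ^S ∈ ℂ, z^F = Hλ^F, z^S = Hλ^S, z = z^F + z^S, and assume I − zD and 𝔐(z^F, z^S) are invertible. Let y_n ∈ ℂ and suppose Y ∈ ℂ^s and Y* ∈ ℂ^s satisfy: Y* = (I − zD)^{−1}(y_n 𝟙 + z T Y); Y₀ := y_n; and for each i = 1, …, s there is a function v_i differentiable on [0, H] with v_i(0) = Y_{i−1}, v_i′(θ) = δc_i λ^F v_i(θ) + λ^S Σ_{j=1}^s Γ_{i,j}(θ/H) Y_j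 + λ^S Σ_{j=1}^s Ψ_{i,j}(θ/H) Y*_j for θ ∈ [0, H], and Y_i = v_i(H). Then Y_s = R(z^F, z^S) y_n, where R(z^F, z^S) = e_sᵀ 𝔐(z^F, z^S)^{−1} ( φ₀(δc₁ z^F) e₁ + z^S ν(z^F)(I − zD)^{−1}𝟙 ). (Scalar linear stability function of an internal stage predictor-corrector MRI-GARK method applied to y′ = λ^F y + λ^S y.) -/
/-!
Multiplying by the integrating factor `exp (lam * (H - θ))` solves each stage equation in closed
form, and the moments of that factor against the monomials `(θ / H) ^ k` are, up to the factor `H`,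
the values of the φ-functions. The differential equations thus collapse to the linear system
`Y = diag(φ₀) (L Y + yₙ e) + z^S (μ Y + ν Y*)`. Eliminating the predictor `Y*` leaves
`𝔐 Y = yₙ (diag(φ₀) e + z^S ν (I - z D)⁻¹ 𝟙)`, and inverting `𝔐` gives all stages at once.
-/

open Matrix

section VariationOfConstants

variable {E : Type*} [NormedAddCommGroup E] [NormedSpace ℂ E] [CompleteSpace E]

theorem eq_exp_smul_add_integral_of_hasDerivWithinAt {a b : ℝ} (hab : a ≤ b) {lam : ℂ}
    {v g : ℝ → E} (hg : ContinuousOn g (Set.Icc a b))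
    (hv : ∀ θ ∈ Set.Icc a b, HasDerivWithinAt v (lam • v θ + g θ) (Set.Icc a b) θ) :
    v b = Complex.exp (lam * (b - a)) • v a
      + ∫ θ in a..b, Complex.exp (lam * (b - θ)) • g θ := by
  have hv_cont : ContinuousOn v (Set.Icc a b) := fun θ hθ => (hv θ hθ).continuousWithinAt
  have hexp_deriv (θ : ℝ) : HasDerivAt (fun t : ℝ => Complex.exp (lam * (b - t)))
      (-(Complex.exp (lam * (b - θ)) * lam)) θ := by
    simpa using ((Complex.ofRealCLM.hasDerivAt (x := θ)).const_sub (b : ℂ)).const_mul lam |>.cexp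
  have hderiv : ∀ θ ∈ Set.Ioo a b, HasDerivAt (fun t : ℝ => Complex.exp (lam * (b - t)) • v t)
      (Complex.exp (lam * (b - θ)) • g θ) θ := fun θ hθ => by
    have hvθ := (hv θ (Set.Ioo_subset_Icc_self hθ)).hasDerivAt (Icc_mem_nhds hθ.1 hθ.2)
    refine ((hexp_deriv θ).smul hvθ).congr_deriv ?_
    module
  have hint := intervalIntegral.integral_eq_sub_of_hasDerivAt_of_le hab
    (ContinuousOn.smul (by fun_prop) hv_cont) hderiv
    (ContinuousOn.intervalIntegrable_of_Icc hab (ContinuousOn.smul (by fun_prop) hg))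
  rw [hint]
  simp

theorem integral_exp_mul_div_pow_eq_mul_phi {H : ℝ} (hH : H ≠ 0) (lam : ℂ) (k : ℕ) :
    ∫ θ in (0 : ℝ)..H, Complex.exp (lam * (H - θ)) * ((θ / H : ℝ) : ℂ) ^ k
      = H * phi (k + 1) (lam * H) := by
  have hH' : (H : ℂ) ≠ 0 := Complex.ofReal_ne_zero.mpr hH
  have hrescale := intervalIntegral.integral_comp_div (a := 0) (b := H)
    (fun t : ℝ => Complex.exp (lam * H * (1 - t)) * (t : ℂ) ^ k) hH
  rw [zero_div, div_self hH, Complex.real_smul] at hrescale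
  rw [phi, ← hrescale]
  refine intervalIntegral.integral_congr fun θ _ => ?_
  have hexponent : lam * H * (1 - ((θ / H : ℝ) : ℂ)) = lam * (H - θ) := by
    push_cast
    field_simp
  simp only [hexponent]

theorem eq_phi_smul_add_sum_of_hasDerivWithinAt {n : ℕ} {H : ℝ} (hH : 0 < H) {lam : ℂ}
    {G : Fin n → E} {v : ℝ → E}
    (hv : ∀ θ ∈ Set.Icc 0 H, HasDerivWithinAt v
      (lam • v θ + ∑ k : Fin n, ((θ / H : ℝ) : ℂ) ^ (k : ℕ) • G k) (Set.Icc 0 H) θ) :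
    v H = phi 0 (lam * H) • v 0 + (H : ℂ) • ∑ k : Fin n, phi (k + 1) (lam * H) • G k := by
  have hforcing : Continuous fun θ : ℝ => ∑ k : Fin n, ((θ / H : ℝ) : ℂ) ^ (k : ℕ) • G k := by
    fun_prop
  rw [eq_exp_smul_add_integral_of_hasDerivWithinAt hH.le hforcing.continuousOn hv]
  congr 1
  · simp [phi]
  simp only [Finset.smul_sum, smul_smul]
  rw [intervalIntegral.integral_finsetSum
    fun k _ => Continuous.intervalIntegrable (by fun_prop) _ _]
  simp only [intervalIntegral.integral_smul_const, integral_exp_mul_div_pow_eq_mul_phi hH.ne']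

end VariationOfConstants

section LinearAlgebra

theorem sum_polynomial_mul_eq_sum_pow_mul_mulVec {R : Type*} [CommSemiring R] {ι : Type*}
    [Fintype ι] {n : ℕ} (Γ : Fin n → Matrix ι ι R) (y : ι → R) (i : ι) (t : R) :
    ∑ j, (∑ k : Fin n, Γ k i j * t ^ (k : ℕ)) * y j
      = ∑ k : Fin n, t ^ (k : ℕ) * (Γ k *ᵥ y) i := by
  simp only [mulVec, dotProduct, Finset.sum_mul, Finset.mul_sum]
  rw [Finset.sum_comm]
  exact Finset.sum_congr rfl fun k _ => Finset.sum_congr rfl fun j _ => by ring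

theorem lowerShift_mulVec_add_smul_single_apply {R : Type*} [Semiring R] {s : ℕ} (hs : 0 < s)
    {L : Matrix (Fin s) (Fin s) R}
    (hL : ∀ i j : Fin s, L i j = if (i : ℕ) = (j : ℕ) + 1 then 1 else 0)
    (Y : Fin s → R) (y₀ : R) (i : Fin s) :
    (L *ᵥ Y + y₀ • (Pi.single ⟨0, hs⟩ 1 : Fin s → R)) i =
      if _ : (i : ℕ) = 0 then y₀
      else Y ⟨(i : ℕ) - 1, Nat.lt_of_le_of_lt (Nat.sub_le _ _) i.2⟩ := by
  split_ifs with hi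
  · have hrow : L i = 0 := funext fun j => by simp [hL, hi]
    obtain rfl : i = ⟨0, hs⟩ := Fin.ext hi
    simp [mulVec, hrow]
  · have hrow : L i = Pi.single ⟨(i : ℕ) - 1, Nat.lt_of_le_of_lt (Nat.sub_le _ _) i.2⟩ 1 := by
      ext j
      rw [hL, Pi.single_apply]
      exact if_congr (by rw [Fin.ext_iff]; dsimp only; omega) rfl rfl
    have hne : i ≠ ⟨0, hs⟩ := fun h => hi (congrArg Fin.val h)
    simp [mulVec, hrow, hne]

variable {R : Type*} [CommRing R] {ι : Type*} [Fintype ι] [DecidableEq ι]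

theorem eq_inv_mulVec_of_mulVec_eq {A : Matrix ι ι R} (hA : IsUnit A.det) {x b : ι → R}
    (h : A *ᵥ x = b) : x = A⁻¹ *ᵥ b :=
  letI := A.invertibleOfIsUnitDet hA
  (inv_mulVec_eq_vec h.symm).symm

theorem sub_mulVec_eq_smul_of_predictor_corrector {B E L T μ ν : Matrix ι ι R} {z zS yn : R}
    {e u Y Ystar : ι → R} (hB : IsUnit B.det) (hpredictor : B *ᵥ Ystar = yn • u + z • T *ᵥ Y)
    (hcorrector : Y = E *ᵥ (L *ᵥ Y + yn • e) + zS • (μ *ᵥ Y + ν *ᵥ Ystar)) :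
    (1 - E * L - zS • μ - (zS * z) • (ν * B⁻¹ * T)) *ᵥ Y
      = yn • (E *ᵥ e + zS • ν *ᵥ (B⁻¹ *ᵥ u)) := by
  rw [eq_inv_mulVec_of_mulVec_eq hB hpredictor] at hcorrector
  simp only [mulVec_add, mulVec_smul, mulVec_mulVec, sub_mulVec, one_mulVec, smul_mulVec,
    Matrix.mul_assoc] at hcorrector ⊢
  linear_combination (norm := module) hcorrector

end LinearAlgebra

section StabilityFunction

variable {ι : Type*} [Fintype ι] [DecidableEq ι] {n : ℕ}

/-- The matrix `∑ₖ diag(φₖ₊₁(c z)) Γᵏ`, which is `μ(z)` for the coefficients `Γ` of the stages and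
`ν(z)` for the coefficients `Ψ` of the predictors. -/
noncomputable def phiMatrix (c : ι → ℂ) (z : ℂ) (Γ : Fin n → Matrix ι ι ℂ) : Matrix ι ι ℂ :=
  ∑ k : Fin n, diagonal (fun i => phi ((k : ℕ) + 1) (c i * z)) * Γ k

/-- The matrix `𝔐(z^F, z^S)` of the linear system satisfied by the stages, for a matrix `L` that
gives the starting value of each stage in terms of the other stages. -/
noncomputable def stageMatrix (c : ι → ℂ) (L D T : Matrix ι ι ℂ) (Γ Ψ : Fin n → Matrix ι ι ℂ)
    (zF zS : ℂ) : Matrix ι ι ℂ :=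
  1 - diagonal (fun i => phi 0 (c i * zF)) * L - zS • phiMatrix c zF Γ
    - (zS * (zF + zS)) • (phiMatrix c zF Ψ * (1 - (zF + zS) • D)⁻¹ * T)

theorem phiMatrix_mulVec_apply (c : ι → ℂ) (z : ℂ) (Γ : Fin n → Matrix ι ι ℂ) (y : ι → ℂ)
    (i : ι) :
    (phiMatrix c z Γ *ᵥ y) i = ∑ k : Fin n, phi ((k : ℕ) + 1) (c i * z) * (Γ k *ᵥ y) i := by
  simp only [phiMatrix, sum_mulVec, Finset.sum_apply, ← mulVec_mulVec, mulVec_diagonal]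

theorem stage_eq_phi_mul_add_phiMatrix_mulVec {c : ι → ℂ} {Γ Ψ : Fin n → Matrix ι ι ℂ} {H : ℝ}
    (hH : 0 < H) {lamF lamS : ℂ} {y ystar : ι → ℂ} {i : ι} {v : ℝ → ℂ}
    (hv : ∀ θ ∈ Set.Icc (0 : ℝ) H, HasDerivWithinAt v
      (c i * lamF * v θ
        + lamS * ∑ j, (∑ k : Fin n, Γ k i j * ((θ / H : ℝ) : ℂ) ^ (k : ℕ)) * y j
        + lamS * ∑ j, (∑ k : Fin n, Ψ k i j * ((θ / H : ℝ) : ℂ) ^ (k : ℕ)) * ystar j)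
      (Set.Icc 0 H) θ) :
    v H = phi 0 (c i * (H * lamF)) * v 0
      + H * lamS * ((phiMatrix c (H * lamF) Γ *ᵥ y) i + (phiMatrix c (H * lamF) Ψ *ᵥ ystar) i) := by
  have hclosed := eq_phi_smul_add_sum_of_hasDerivWithinAt hH (lam := c i * lamF)
    (G := fun k => lamS * ((Γ k *ᵥ y) i + (Ψ k *ᵥ ystar) i)) (v := v) fun θ hθ => by
      refine (hv θ hθ).congr_deriv ?_
      rw [sum_polynomial_mul_eq_sum_pow_mul_mulVec, sum_polynomial_mul_eq_sum_pow_mul_mulVec,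
        add_assoc, ← mul_add, ← Finset.sum_add_distrib, Finset.mul_sum]
      simp only [smul_eq_mul, mul_add, mul_left_comm]
  rw [hclosed, mul_assoc (c i), mul_comm lamF, phiMatrix_mulVec_apply, phiMatrix_mulVec_apply,
    ← Finset.sum_add_distrib, mul_assoc, Finset.mul_sum]
  simp only [smul_eq_mul, mul_add, mul_left_comm]

theorem stmt_14_general {c e : ι → ℂ} {L D T : Matrix ι ι ℂ} {Γ Ψ : Fin n → Matrix ι ι ℂ}
    {H : ℝ} (hH : 0 < H) {lamF lamS zF zS : ℂ} (hzF : zF = H * lamF) (hzS : zS = H * lamS)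
    (hDinv : IsUnit (1 - (zF + zS) • D).det)
    (hMinv : IsUnit (stageMatrix c L D T Γ Ψ zF zS).det) {yn : ℂ} {Y Ystar : ι → ℂ}
    (hYstar : (1 - (zF + zS) • D) *ᵥ Ystar = yn • 1 + (zF + zS) • T *ᵥ Y) {v : ι → ℝ → ℂ}
    (hv0 : ∀ i, v i 0 = (L *ᵥ Y + yn • e) i)
    (hv : ∀ i, ∀ θ ∈ Set.Icc (0 : ℝ) H, HasDerivWithinAt (v i)
      (c i * lamF * v i θ
        + lamS * ∑ j, (∑ k : Fin n, Γ k i j * ((θ / H : ℝ) : ℂ) ^ (k : ℕ)) * Y j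
        + lamS * ∑ j, (∑ k : Fin n, Ψ k i j * ((θ / H : ℝ) : ℂ) ^ (k : ℕ)) * Ystar j)
      (Set.Icc 0 H) θ)
    (hY : ∀ i, Y i = v i H) :
    Y = yn • (stageMatrix c L D T Γ Ψ zF zS)⁻¹ *ᵥ
      (diagonal (fun i => phi 0 (c i * zF)) *ᵥ e
        + zS • phiMatrix c zF Ψ *ᵥ ((1 - (zF + zS) • D)⁻¹ *ᵥ 1)) := by
  have hcorrector : Y = diagonal (fun i => phi 0 (c i * zF)) *ᵥ (L *ᵥ Y + yn • e)
      + zS • (phiMatrix c zF Γ *ᵥ Y + phiMatrix c zF Ψ *ᵥ Ystar) := by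
    ext i
    rw [hY i, stage_eq_phi_mul_add_phiMatrix_mulVec hH (hv i), hv0 i, ← hzF, ← hzS]
    simp only [Pi.add_apply, Pi.smul_apply, smul_eq_mul, mulVec_diagonal]
  rw [← mulVec_smul]
  exact eq_inv_mulVec_of_mulVec_eq hMinv
    (sub_mulVec_eq_smul_of_predictor_corrector hDinv hYstar hcorrector)

end StabilityFunction

/-- Scalar linear stability function of an internal stage predictor-corrector
MRI-GARK method applied to y′ = λ^F y + λ^S y. -/
theorem stmt_14 (s K : ℕ) (hs : 0 < s)
    (D T : Matrix (Fin s) (Fin s) ℝ) (hD : D.IsDiag)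
    (hT : ∀ i j : Fin s, i ≤ j → T i j = 0)
    (A : Matrix (Fin s) (Fin s) ℝ) (hA : A = D + T)
    (δc cbar : Fin s → ℝ)
    (Γ Ψ : Fin (K + 1) → Matrix (Fin s) (Fin s) ℝ)
    (H : ℝ) (hH : 0 < H) (lamF lamS zF zS z : ℂ)
    (hzF : zF = H * lamF) (hzS : zS = H * lamS) (hz : z = zF + zS)
    (L : Matrix (Fin s) (Fin s) ℂ)
    (hL : ∀ i j : Fin s, L i j = if (i : ℕ) = (j : ℕ) + 1 then 1 else 0)
    (μ ν : Matrix (Fin s) (Fin s) ℂ)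
    (hμ : μ = ∑ k : Fin (K + 1),
      Matrix.diagonal (fun i => phi ((k : ℕ) + 1) (((δc i : ℝ) : ℂ) * zF)) *
        (Γ k).map Complex.ofReal)
    (hν : ν = ∑ k : Fin (K + 1),
      Matrix.diagonal (fun i => phi ((k : ℕ) + 1) (((δc i : ℝ) : ℂ) * zF)) *
        (Ψ k).map Complex.ofReal)
    (M : Matrix (Fin s) (Fin s) ℂ)
    (hM : M = 1 - Matrix.diagonal (fun i => phi 0 (((δc i : ℝ) : ℂ) * zF)) * L
        - zS • μ
        - (zS * z) • (ν * (1 - z • D.map Complex.ofReal)⁻¹ * T.map Complex.ofReal))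
    (hDinv : IsUnit (1 - z • D.map Complex.ofReal).det)
    (hMinv : IsUnit M.det)
    (yn : ℂ) (Y Ystar : Fin s → ℂ)
    (hYstar : Ystar = (1 - z • D.map Complex.ofReal)⁻¹.mulVec
        (yn • (fun _ : Fin s => (1 : ℂ)) + z • (T.map Complex.ofReal).mulVec Y))
    (v : Fin s → ℝ → ℂ)
    (hv0 : ∀ i : Fin s, v i 0 =
      if _ : (i : ℕ) = 0 then yn
      else Y ⟨(i : ℕ) - 1, Nat.lt_of_le_of_lt (Nat.sub_le _ _) i.2⟩)
    (hv : ∀ i : Fin s, ∀ θ ∈ Set.Icc (0 : ℝ) H,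
      HasDerivWithinAt (v i)
        (((δc i : ℝ) : ℂ) * lamF * v i θ
          + lamS * ∑ j, (∑ k : Fin (K + 1),
              ((Γ k i j : ℝ) : ℂ) * (((θ / H : ℝ)) : ℂ) ^ (k : ℕ)) * Y j
          + lamS * ∑ j, (∑ k : Fin (K + 1),
              ((Ψ k i j : ℝ) : ℂ) * (((θ / H : ℝ)) : ℂ) ^ (k : ℕ)) * Ystar j)
        (Set.Icc 0 H) θ)
    (hY : ∀ i : Fin s, Y i = v i H) :
    Y ⟨s - 1, Nat.sub_lt hs Nat.one_pos⟩ =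
      (M⁻¹.mulVec
        (phi 0 (((δc ⟨0, hs⟩ : ℝ) : ℂ) * zF) • (Pi.single (⟨0, hs⟩ : Fin s) (1 : ℂ) : Fin s → ℂ)
          + zS • ν.mulVec ((1 - z • D.map Complex.ofReal)⁻¹.mulVec (fun _ : Fin s => (1 : ℂ)))))
        ⟨s - 1, Nat.sub_lt hs Nat.one_pos⟩ * yn := by
  have hpredictor : (1 - z • D.map Complex.ofReal) *ᵥ Ystar
      = yn • 1 + z • T.map Complex.ofReal *ᵥ Y := by
    rw [hYstar, mulVec_mulVec, mul_nonsing_inv _ hDinv, one_mulVec]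
    rfl
  subst hz hM hμ hν
  have hstages := stmt_14_general hH hzF hzS hDinv hMinv hpredictor
    (fun i => (hv0 i).trans (lowerShift_mulVec_add_smul_single_apply hs hL Y yn i).symm) hv hY
  rw [diagonal_mulVec_single, ← smul_eq_mul, Pi.single_smul] at hstages
  rw [mul_comm]
  exact congrFun hstages _
end
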